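/- arXiv:1901.01716 — 2 statements merged into one kernel-verified Lean document; each statement's English description precedes it below -/
import Mathlib

section
/- Let R be a principal ideal domain, let (K,w) be a weighted simplicial complex over R, let σ^{(n)} be a maximal face of K with w(σ) ≠ 0, and let L = K \ {σ}. If the class [∂^w σ] ∈ H_{n−1}(L,w) is a torsion element (i.e. there exists r ∈ R \ {0} with r·[∂^w σ] = 0), then H_n(K,w) ≅ H_n(L,w) ⊕ R; if [∂^w σ] is not a torsion element, then H_n(K,w) ≅ H_n(L,w). -/
/-!
Since `σ` is maximal, it occurs in no boundary of an `(n+1)`-simplex, so the `n`-boundaries of `K` and `L` agree and the coefficient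
at `σ` descends to a functional `ψ : H_n(K,w) → R` whose kernel is the image of the injection
`H_n(L,w) → H_n(K,w)`. A chain `y + a σ`, with `y` a chain of `L`, is a cycle exactly when
`∂ y = - a ∂ σ`, so the image of `ψ` is the annihilator of `[∂ σ]` in `H_{n-1}(L,w)`. If this ideal
is zero then `H_n(L,w) → H_n(K,w)` is an isomorphism. Otherwise it is `(d)` with `d ≠ 0`, hence free
of rank one, and the short exact sequence splits by lifting `d`.

The algebra is in `nonempty_equiv_prod_of_map_ne_bot` and `nonempty_equiv_of_map_eq_bot`; the
comparison of boundaries is in `bdElem_eq_incl`.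
-/

/-! # Prelude: weighted simplicial complexes and discrete Morse theory -/

/-- A finite abstract simplicial complex on a vertex type `V`:
a finite set of nonempty finite vertex sets, closed under nonempty subsets. -/
structure FinSC (V : Type*) where
  faces : Finset (Finset V)
  not_empty_mem : ∅ ∉ faces
  down_closed : ∀ σ ∈ faces, ∀ τ ⊆ σ, τ.Nonempty → τ ∈ faces

namespace FinSC

variable {V : Type*} [LinearOrder V] {R : Type*} [CommRing R] [IsDomain R]

/-- `(K, w)` is a weighted simplicial complex: weights of faces divide weights of cofaces. -/
def IsWeight (K : FinSC V) (w : Finset V → R) : Prop :=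
  ∀ σ ∈ K.faces, ∀ τ ∈ K.faces, σ ⊆ τ → w σ ∣ w τ

open scoped Classical in
/-- The quotient `a / b` in an integral domain, defined (via choice) when `b ∣ a`, else `0`. -/
noncomputable def divR {R : Type*} [CommRing R] (a b : R) : R :=
  if h : b ∣ a then h.choose else 0

/-- `dFace σ i` deletes the `i`-th vertex (in the linear order) from the simplex `σ`. -/
def dFace (σ : Finset V) (i : ℕ) : Finset V :=
  match (σ.sort (· ≤ ·))[i]? with
  | some v => σ.erase v
  | none => σ

/-- The basis of the weighted chain group in degree `n`:
`n`-simplices (i.e. of cardinality `n+1`) of `K` with nonzero weight. -/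
abbrev ChainIdx (K : FinSC V) (w : Finset V → R) (n : ℕ) :=
  {σ : Finset V // σ ∈ K.faces ∧ σ.card = n + 1 ∧ w σ ≠ 0}

/-- The weighted chain group `C_n(K, w)`: the free `R`-module on the `n`-simplices
of `K` with nonzero weight. -/
abbrev WChain (K : FinSC V) (w : Finset V → R) (n : ℕ) :=
  ChainIdx K w n →₀ R

open scoped Classical in
/-- The weighted boundary `∂^w σ = Σ_i (-1)^i (w σ / w (d_i σ)) d_i σ` of a single
`(n+1)`-simplex `σ`, as an element of `C_n(K, w)`. -/
noncomputable def bdElem (K : FinSC V) (w : Finset V → R) (n : ℕ) (σ : Finset V) :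
    WChain K w n :=
  ∑ i ∈ Finset.range (n + 2),
    if h : dFace σ i ∈ K.faces ∧ (dFace σ i).card = n + 1 ∧ w (dFace σ i) ≠ 0 then
      Finsupp.single (⟨dFace σ i, h⟩ : ChainIdx K w n)
        ((-1 : R) ^ i * divR (w σ) (w (dFace σ i)))
    else 0

/-- The weighted boundary map `∂^w_{n+1} : C_{n+1}(K,w) → C_n(K,w)`. -/
noncomputable def wBoundary (K : FinSC V) (w : Finset V → R) (n : ℕ) :
    WChain K w (n + 1) →ₗ[R] WChain K w n :=
  Finsupp.linearCombination R (fun σ : ChainIdx K w (n + 1) => bdElem K w n σ.1)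

/-- The submodule of weighted `n`-cycles (`ker ∂^w_n`; everything in degree `0`). -/
noncomputable def cycles (K : FinSC V) (w : Finset V → R) :
    (n : ℕ) → Submodule R (WChain K w n)
  | 0 => ⊤
  | n + 1 => LinearMap.ker (wBoundary K w n)

/-- The submodule of weighted `n`-boundaries (`im ∂^w_{n+1}`). -/
noncomputable def bdries (K : FinSC V) (w : Finset V → R) (n : ℕ) :
    Submodule R (WChain K w n) :=
  LinearMap.range (wBoundary K w n)

/-- The `n`-th weighted homology `H_n(K,w) = ker ∂^w_n / im ∂^w_{n+1}`, realized as the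
image of the cycles in `C_n(K,w) ⧸ im ∂^w_{n+1}` (since `im ∂^w_{n+1} ⊆ ker ∂^w_n`,
this is exactly `ker ∂^w_n / im ∂^w_{n+1}`). -/
noncomputable def wHomologyS (K : FinSC V) (w : Finset V → R) (n : ℕ) :
    Submodule R (WChain K w n ⧸ bdries K w n) :=
  Submodule.map (bdries K w n).mkQ (cycles K w n)

/-- The `n`-th weighted homology as a type (an `R`-module). -/
abbrev wHomology (K : FinSC V) (w : Finset V → R) (n : ℕ) :=
  ↥(wHomologyS K w n)

/-- The homology class of a weighted cycle. -/
noncomputable def classOf (K : FinSC V) (w : Finset V → R) (n : ℕ)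
    (z : WChain K w n) (hz : z ∈ cycles K w n) : wHomology K w n :=
  ⟨(bdries K w n).mkQ z, Submodule.mem_map_of_mem hz⟩

/-- `σ` is a free face of `τ` in `K`: `σ` is a proper face of `τ` and of no other simplex. -/
def IsFreeFace (K : FinSC V) (σ τ : Finset V) : Prop :=
  σ ∈ K.faces ∧ τ ∈ K.faces ∧ σ ⊂ τ ∧ ∀ ρ ∈ K.faces, σ ⊂ ρ → ρ = τ

/-- An elementary collapse: removal of a free face pair. -/
def ElemCollapse (K L : FinSC V) : Prop :=
  ∃ σ τ : Finset V, IsFreeFace K σ τ ∧ L.faces = K.faces \ {σ, τ}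

/-- `K ↘ L`: `K` collapses onto `L` by a finite sequence of elementary collapses. -/
def Collapses (K L : FinSC V) : Prop :=
  Relation.ReflTransGen ElemCollapse K L

/-- `σ` is a maximal face of `K`: it is a proper face of no simplex of `K`. -/
def IsMaximalFace (K : FinSC V) (σ : Finset V) : Prop :=
  σ ∈ K.faces ∧ ∀ τ ∈ K.faces, ¬ σ ⊂ τ

/-- `f : K → ℝ` is a discrete Morse function: each simplex has at most one
codimension-one coface with no bigger `f`-value, and at most one codimension-one
face with no smaller `f`-value. -/
def IsDiscreteMorse (K : FinSC V) (f : Finset V → ℝ) : Prop :=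
  ∀ α ∈ K.faces,
    {β : Finset V | β ∈ K.faces ∧ α ⊂ β ∧ β.card = α.card + 1 ∧ f β ≤ f α}.Subsingleton ∧
    {γ : Finset V | γ ∈ K.faces ∧ γ ⊂ α ∧ γ.card + 1 = α.card ∧ f α ≤ f γ}.Subsingleton

/-- `α` is a critical simplex of the discrete Morse function `f`. -/
def IsCritical (K : FinSC V) (f : Finset V → ℝ) (α : Finset V) : Prop :=
  (∀ β ∈ K.faces, α ⊂ β → β.card = α.card + 1 → ¬ f β ≤ f α) ∧
  (∀ γ ∈ K.faces, γ ⊂ α → γ.card + 1 = α.card → ¬ f α ≤ f γ)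

/-- `α` is `w`-simple: `w α ≠ 0`, and any codimension-one face `γ < α` with
`f γ ≥ f α` satisfies `w γ = w α`. -/
def IsWSimple (K : FinSC V) (w : Finset V → R) (f : Finset V → ℝ) (α : Finset V) : Prop :=
  w α ≠ 0 ∧ ∀ γ ∈ K.faces, γ ⊂ α → γ.card + 1 = α.card → f α ≤ f γ → w γ = w α

/-- The level subcomplex `K(c)`: all simplices with `f`-value at most `c`,
together with all of their faces. -/
noncomputable def levelSub (K : FinSC V) (f : Finset V → ℝ) (c : ℝ) : FinSC V where
  faces := K.faces.filter (fun α => ∃ β ∈ K.faces, α ⊆ β ∧ f β ≤ c)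
  not_empty_mem := by simp [Finset.mem_filter, K.not_empty_mem]
  down_closed := by
    intro σ hσ τ hτsub hτne
    simp only [Finset.mem_filter] at hσ ⊢
    obtain ⟨hσK, β, hβ, hσβ, hfβ⟩ := hσ
    exact ⟨K.down_closed σ hσK τ hτsub hτne, β, hβ, hτsub.trans hσβ, hfβ⟩

/-- The chains of `C_n(K,w)` supported on simplices of a subcomplex `L`. -/
noncomputable def chainsIn (K L : FinSC V) (w : Finset V → R) (n : ℕ) :
    Submodule R (WChain K w n) where
  carrier := {x | ∀ σ : ChainIdx K w n, x σ ≠ 0 → σ.1 ∈ L.faces}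
  add_mem' := by
    intro a b ha hb σ h
    by_cases h1 : a σ = 0
    · exact hb σ (by simpa [h1] using h)
    · exact ha σ h1
  zero_mem' := by intro σ h; simp at h
  smul_mem' := by
    intro r x hx σ h
    refine hx σ fun h0 => ?_
    simp [Finsupp.smul_apply, h0] at h

/-- The image of the map `i_* : H_n(L,w) → H_n(K,w)` induced by the inclusion of
chain complexes: the classes in `H_n(K,w)` of cycles of `K` supported on simplices
of the subcomplex `L`. -/
noncomputable def imInduced (K L : FinSC V) (w : Finset V → R) (n : ℕ) :
    Submodule R (wHomology K w n) :=
  Submodule.comap (wHomologyS K w n).subtype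
    (Submodule.map (bdries K w n).mkQ (cycles K w n ⊓ chainsIn K L w n))

end FinSC

section OrderComplex

variable {A : Type*} [LinearOrder A]

/-- The proper (nonempty, not all of `S`) substrings of a sequence `S`,
i.e. its proper nonempty infixes. -/
def properSubstr (S : List A) : Finset (List A) :=
  ((S.tails.flatMap List.inits).toFinset).filter (fun T => T ≠ [] ∧ T ≠ S)

/-- The order complex `Δ(P_S)` of the poset of proper substrings of `S` under the
substring (infix) partial order: faces are the nonempty chains. -/
def orderComplex (S : List A) : FinSC (List A) where
  faces := (properSubstr S).powerset.filter
    (fun σ => σ.Nonempty ∧ ∀ T₁ ∈ σ, ∀ T₂ ∈ σ, T₁ <:+: T₂ ∨ T₂ <:+: T₁)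
  not_empty_mem := by simp
  down_closed := by
    intro σ hσ τ hτsub hτne
    simp only [Finset.mem_filter, Finset.mem_powerset] at hσ ⊢
    exact ⟨hτsub.trans hσ.1, hτne,
      fun T₁ h1 T₂ h2 => hσ.2.2 T₁ (hτsub h1) T₂ (hτsub h2)⟩

end OrderComplex

namespace FinSC

variable {V : Type*} [LinearOrder V] {R : Type*} [CommRing R] [IsDomain R]

section Algebra

variable {S : Type*} [CommRing S] {A B : Type*} [AddCommGroup A] [Module S A]
  [AddCommGroup B] [Module S B]

/-- The map `ZL / (ZL ∩ BL) → ZK / (ZK ∩ BK)` induced by `ι`, where the subquotients are realized as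
images of `ZL`, `ZK` in `A ⧸ BL`, `B ⧸ BK`. -/
noncomputable def subquotMap (ι : A →ₗ[S] B) (ZL BL : Submodule S A) (ZK BK : Submodule S B)
    (hB : BL.map ι = BK) (hZ : ZK.comap ι = ZL) : ZL.map BL.mkQ →ₗ[S] ZK.map BK.mkQ :=
  (BL.mapQ BK ι (Submodule.map_le_iff_le_comap.1 hB.le)).restrict (by
    rintro _ ⟨z, hz, rfl⟩
    subst hZ
    exact ⟨ι z, hz, rfl⟩)

/-- The functional on the subquotient `ZK / (ZK ∩ BK)` induced by a functional vanishing on `BK`. -/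
noncomputable def subquotFun (φ : B →ₗ[S] S) (ZK BK : Submodule S B)
    (h : BK ≤ LinearMap.ker φ) : ZK.map BK.mkQ →ₗ[S] S :=
  (BK.liftQ φ h).domRestrict _

variable {ι : A →ₗ[S] B} {φ : B →ₗ[S] S} {ZL BL : Submodule S A} {ZK BK : Submodule S B}

theorem subquotMap_injective (hι : Function.Injective ι) (hB : BL.map ι = BK)
    (hZ : ZK.comap ι = ZL) : Function.Injective (subquotMap ι ZL BL ZK BK hB hZ) := by
  rw [injective_iff_map_eq_zero]
  rintro ⟨_, z, hz, rfl⟩ h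
  have h' : BK.mkQ (ι z) = 0 := congrArg Subtype.val h
  rw [Submodule.mkQ_apply, Submodule.Quotient.mk_eq_zero, ← hB] at h'
  obtain ⟨b, hb, hbz⟩ := h'
  obtain rfl := hι hbz
  exact Subtype.ext ((Submodule.Quotient.mk_eq_zero _).2 hb)

theorem le_ker_of_map_eq (hex : LinearMap.ker φ = LinearMap.range ι) (hB : BL.map ι = BK) :
    BK ≤ LinearMap.ker φ := by
  rw [hex, ← hB]
  exact LinearMap.map_le_range

theorem subquot_exact (hex : LinearMap.ker φ = LinearMap.range ι) (hB : BL.map ι = BK)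
    (hZ : ZK.comap ι = ZL) :
    LinearMap.ker (subquotFun φ ZK BK (le_ker_of_map_eq hex hB)) =
      LinearMap.range (subquotMap ι ZL BL ZK BK hB hZ) := by
  apply le_antisymm
  · rintro ⟨_, z, hz, rfl⟩ h
    have h' : z ∈ LinearMap.ker φ := h
    rw [hex] at h'
    obtain ⟨y, rfl⟩ := h'
    exact ⟨⟨BL.mkQ y, y, hZ ▸ hz, rfl⟩, rfl⟩
  · rintro _ ⟨⟨_, z, hz, rfl⟩, rfl⟩
    change ι z ∈ LinearMap.ker φ
    rw [hex]
    exact ⟨z, rfl⟩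

theorem nonempty_equiv_of_map_eq_bot (hι : Function.Injective ι)
    (hex : LinearMap.ker φ = LinearMap.range ι) (hB : BL.map ι = BK) (hZ : ZK.comap ι = ZL)
    (h0 : ZK.map φ = ⊥) : Nonempty (ZK.map BK.mkQ ≃ₗ[S] ZL.map BL.mkQ) := by
  refine ⟨(LinearEquiv.ofBijective (subquotMap ι ZL BL ZK BK hB hZ)
    ⟨subquotMap_injective hι hB hZ, ?_⟩).symm⟩
  rw [← LinearMap.range_eq_top, ← subquot_exact hex hB hZ, eq_top_iff]
  rintro ⟨_, z, hz, rfl⟩ -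
  change φ z = 0
  rw [← Submodule.mem_bot S, ← h0]
  exact ⟨z, hz, rfl⟩

theorem nonempty_equiv_prod_of_map_ne_bot [IsDomain S] [IsPrincipalIdealRing S]
    (hι : Function.Injective ι)
    (hex : LinearMap.ker φ = LinearMap.range ι) (hB : BL.map ι = BK) (hZ : ZK.comap ι = ZL)
    (h0 : ZK.map φ ≠ ⊥) : Nonempty (ZK.map BK.mkQ ≃ₗ[S] (ZL.map BL.mkQ × S)) := by
  obtain ⟨d, hd⟩ := (IsPrincipalIdealRing.principal (ZK.map φ)).principal
  have hd0 : d ≠ 0 := by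
    rintro rfl
    exact h0 (by rw [hd]; simp)
  obtain ⟨z, hz, hzd⟩ : d ∈ ZK.map φ := hd ▸ Submodule.mem_span_singleton_self d
  set ψ := subquotFun φ ZK BK (le_ker_of_map_eq hex hB) with hψ
  set f := subquotMap ι ZL BL ZK BK hB hZ with hf
  have hE : LinearMap.ker ψ = LinearMap.range f := subquot_exact hex hB hZ
  let c : ZK.map BK.mkQ := ⟨BK.mkQ z, z, hz, rfl⟩
  have hc : ψ c = d := hzd
  have hψf : ∀ x, ψ (f x) = 0 := fun x => by
    rw [← LinearMap.mem_ker, hE]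
    exact ⟨x, rfl⟩
  refine ⟨(LinearEquiv.ofBijective (f.coprod (LinearMap.toSpanSingleton S _ c)) ⟨?_, ?_⟩).symm⟩
  · rw [injective_iff_map_eq_zero]
    rintro ⟨x, r⟩ h
    simp only [LinearMap.coprod_apply, LinearMap.toSpanSingleton_apply] at h
    have hr : r = 0 := by
      have := congrArg ψ h
      simpa [hψf, hc, hd0] using this
    subst hr
    have hx : x = 0 := subquotMap_injective hι hB hZ (by simpa using h)
    rw [hx]
    rfl
  · rintro y
    have hy : ψ y ∈ ZK.map φ := by
      obtain ⟨_, v, hv, rfl⟩ := y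
      exact ⟨v, hv, rfl⟩
    rw [hd, Submodule.mem_span_singleton] at hy
    obtain ⟨r, hr⟩ := hy
    have hk : y - r • c ∈ LinearMap.ker ψ := by
      rw [LinearMap.mem_ker, map_sub, map_smul, hc, hr, sub_self]
    rw [hE] at hk
    obtain ⟨x, hx⟩ := hk
    exact ⟨(x, r), by simp [LinearMap.toSpanSingleton_apply, hx]⟩

end Algebra

section Inclusion

set_option linter.unusedSectionVars false

theorem dFace_subset (τ : Finset V) (i : ℕ) : dFace τ i ⊆ τ := by
  unfold dFace
  split
  · exact Finset.erase_subset _ _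
  · exact subset_rfl

/-- The inclusion of basis simplices for a subcomplex `L` of `K`. -/
def idxIncl {K L : FinSC V} (h : L.faces ⊆ K.faces) (w : Finset V → R) (m : ℕ) :
    ChainIdx L w m → ChainIdx K w m :=
  fun τ => ⟨τ.1, h τ.2.1, τ.2.2⟩

theorem idxIncl_injective {K L : FinSC V} (h : L.faces ⊆ K.faces) (w : Finset V → R) (m : ℕ) :
    Function.Injective (idxIncl h w m) :=
  fun _ _ e => Subtype.ext (congrArg (fun x => x.1) e)

/-- The inclusion of weighted chain groups `C_m(L,w) → C_m(K,w)` for a subcomplex `L` of `K`. -/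
noncomputable def incl {K L : FinSC V} (h : L.faces ⊆ K.faces) (w : Finset V → R) (m : ℕ) :
    WChain L w m →ₗ[R] WChain K w m :=
  Finsupp.lmapDomain R R (idxIncl h w m)

variable {K L : FinSC V} (h : L.faces ⊆ K.faces) (w : Finset V → R) (m : ℕ)

theorem incl_injective : Function.Injective (incl h w m) :=
  Finsupp.mapDomain_injective (idxIncl_injective h w m)

theorem incl_single (τ : ChainIdx L w m) (a : R) :
    incl h w m (Finsupp.single τ a) = Finsupp.single (idxIncl h w m τ) a :=
  Finsupp.mapDomain_single

/-- The boundary of `τ` in `K` is its boundary in `L` as soon as `L` contains the codimension-one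
faces of `τ` lying in `K`; `τ` itself need not lie in `L`. -/
theorem bdElem_eq_incl (τ : Finset V)
    (hτ : ∀ i, dFace τ i ∈ K.faces → (dFace τ i).card = m + 1 → dFace τ i ∈ L.faces) :
    bdElem K w m τ = incl h w m (bdElem L w m τ) := by
  unfold bdElem
  rw [map_sum]
  refine Finset.sum_congr rfl fun i _ => ?_
  by_cases hL : dFace τ i ∈ L.faces ∧ (dFace τ i).card = m + 1 ∧ w (dFace τ i) ≠ 0
  · rw [dif_pos hL, dif_pos ⟨h hL.1, hL.2⟩, incl_single]
    rfl
  · rw [dif_neg hL, dif_neg fun hK => hL ⟨hτ i hK.1 hK.2.1, hK.2⟩, map_zero]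

theorem wBoundary_single (M : FinSC V) (τ : ChainIdx M w (m + 1)) (a : R) :
    wBoundary M w m (Finsupp.single τ a) = a • bdElem M w m τ.1 :=
  Finsupp.linearCombination_single _ _ _

theorem wBoundary_comp_incl :
    wBoundary K w m ∘ₗ incl h w (m + 1) = incl h w m ∘ₗ wBoundary L w m := by
  refine Finsupp.lhom_ext fun τ a => ?_
  rw [LinearMap.comp_apply, LinearMap.comp_apply, incl_single, wBoundary_single,
    wBoundary_single, map_smul, ← bdElem_eq_incl h w m τ.1]
  · rfl
  · intro i _ hc
    exact L.down_closed _ τ.2.1 _ (dFace_subset _ _) (Finset.card_pos.1 (by omega))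

theorem wBoundary_incl (x : WChain L w (m + 1)) :
    wBoundary K w m (incl h w (m + 1) x) = incl h w m (wBoundary L w m x) :=
  LinearMap.congr_fun (wBoundary_comp_incl h w m) x

end Inclusion

section Removal

set_option linter.unusedSectionVars false

variable {K L : FinSC V} {σ : Finset V} (h : L.faces ⊆ K.faces) (w : Finset V → R) (m : ℕ)

/-- Chains of `L = K \ {σ}` are the chains of `K` with vanishing coefficient at `σ`. -/
theorem ker_coeff_eq_range_incl (hL : L.faces = K.faces.erase σ)
    (s : ChainIdx K w m) (hs : s.1 = σ) :
    LinearMap.ker (Finsupp.lapply s : WChain K w m →ₗ[R] R) = LinearMap.range (incl h w m) := by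
  apply le_antisymm
  · intro x hx
    rw [LinearMap.mem_ker, Finsupp.lapply_apply] at hx
    rw [← x.sum_single]
    refine Submodule.sum_mem _ fun τ hτ => ?_
    have hne : τ.1 ≠ σ := fun e => by
      have : τ = s := Subtype.ext (e.trans hs.symm)
      subst this
      exact (Finsupp.mem_support_iff.1 hτ) hx
    have hτL : τ.1 ∈ L.faces := hL ▸ Finset.mem_erase.2 ⟨hne, τ.2.1⟩
    exact ⟨Finsupp.single ⟨τ.1, hτL, τ.2.2⟩ (x τ), incl_single ..⟩
  · rintro _ ⟨y, rfl⟩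
    rw [LinearMap.mem_ker, Finsupp.lapply_apply]
    refine Finsupp.mapDomain_of_notMem_range _ _ ?_
    rintro ⟨τ, hτ⟩
    have e : τ.1 = σ := (congrArg (fun x => x.1) hτ).trans hs
    have hmem : σ ∈ L.faces := e ▸ τ.2.1
    rw [hL] at hmem
    exact Finset.notMem_erase _ _ hmem

theorem incl_surjective_of_card_ne (hL : L.faces = K.faces.erase σ) (hc : σ.card ≠ m + 1) :
    Function.Surjective (incl h w m) := by
  refine Finsupp.mapDomain_surjective fun τ => ?_
  have hτL : τ.1 ∈ L.faces :=
    hL ▸ Finset.mem_erase.2 ⟨fun e => hc (e ▸ τ.2.2.1), τ.2.1⟩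
  exact ⟨⟨τ.1, hτL, τ.2.2⟩, rfl⟩

theorem map_incl_bdries (hL : L.faces = K.faces.erase σ) (hc : σ.card ≠ m + 2) :
    (bdries L w m).map (incl h w m) = bdries K w m := by
  unfold bdries
  rw [← LinearMap.range_comp, ← wBoundary_comp_incl, LinearMap.range_comp_of_range_eq_top]
  exact LinearMap.range_eq_top.2 (incl_surjective_of_card_ne h w (m + 1) hL hc)

theorem comap_incl_cycles :
    (cycles K w (m + 1)).comap (incl h w (m + 1)) = cycles L w (m + 1) := by
  ext x
  change wBoundary K w m (incl h w (m + 1) x) = 0 ↔ wBoundary L w m x = 0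
  rw [wBoundary_incl, map_eq_zero_iff _ (incl_injective h w m)]

/-- Some cycle of `K` involves `σ` if and only if a nonzero multiple of `∂ σ` bounds in `L`. -/
theorem map_coeff_cycles_ne_bot_iff (hL : L.faces = K.faces.erase σ) (hc : σ.card = m + 2)
    (s : ChainIdx K w (m + 1)) (hs : s.1 = σ) :
    (cycles K w (m + 1)).map (Finsupp.lapply s : WChain K w (m + 1) →ₗ[R] R) ≠ ⊥ ↔
      ∃ r : R, r ≠ 0 ∧ r • bdElem L w m σ ∈ bdries L w m := by
  have h : L.faces ⊆ K.faces := hL ▸ Finset.erase_subset _ _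
  have hbd : bdElem K w m σ = incl h w m (bdElem L w m σ) := by
    refine bdElem_eq_incl h w m σ fun i hi hci => ?_
    rw [hL]
    refine Finset.mem_erase.2 ⟨fun e => ?_, hi⟩
    rw [e] at hci
    omega
  have key : ∀ (y : WChain L w (m + 1)) (a : R),
      incl h w (m + 1) y + Finsupp.single s a ∈ cycles K w (m + 1) ↔
        wBoundary L w m y + a • bdElem L w m σ = 0 := fun y a => by
    change wBoundary K w m _ = 0 ↔ _
    rw [map_add, wBoundary_incl, wBoundary_single, hs, hbd, ← map_smul, ← map_add,
      map_eq_zero_iff _ (incl_injective h w m)]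
  have hker := ker_coeff_eq_range_incl h w (m + 1) hL s hs
  rw [Submodule.ne_bot_iff]
  constructor
  · rintro ⟨a, ⟨x, hx, hxa⟩, ha⟩
    have hx' : x - Finsupp.single s a ∈
        LinearMap.ker (Finsupp.lapply s : WChain K w (m + 1) →ₗ[R] R) := by
      rw [LinearMap.mem_ker, map_sub, hxa]
      simp
    rw [hker] at hx'
    obtain ⟨y, hy⟩ := hx'
    have hxy : incl h w (m + 1) y + Finsupp.single s a = x := by rw [hy, sub_add_cancel]
    have h0 := (key y a).1 (hxy ▸ hx)
    refine ⟨a, ha, -y, ?_⟩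
    rw [map_neg]
    exact neg_eq_of_add_eq_zero_right h0
  · rintro ⟨r, hr, y, hy⟩
    refine ⟨r, ⟨incl h w (m + 1) (-y) + Finsupp.single s r, (key _ _).2 ?_, ?_⟩, hr⟩
    · rw [map_neg, hy, neg_add_cancel]
    · have : incl h w (m + 1) (-y) ∈
          LinearMap.ker (Finsupp.lapply s : WChain K w (m + 1) →ₗ[R] R) := hker ▸ ⟨_, rfl⟩
      rw [map_add, LinearMap.mem_ker.1 this]
      simp

end Removal

/-- Corollary `cor:removalhom`.  Let `R` be a PID, `(K,w)` a weighted
simplicial complex over `R`, `σ^{(n)}` (`n ≥ 1`) a maximal face of `K` with `w σ ≠ 0`, and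
`L = K \ {σ}`.  If the class `[∂^w σ] ∈ H_{n-1}(L,w)` is a torsion element then
`H_n(K,w) ≅ H_n(L,w) ⊕ R`; if it is not a torsion element then
`H_n(K,w) ≅ H_n(L,w)`. -/
theorem elemRemoval_wHomology_pid [IsPrincipalIdealRing R]
    (K L : FinSC V) (w : Finset V → R) (hw : IsWeight K w)
    (n : ℕ) (hn : 1 ≤ n) (σ : Finset V) (hσcard : σ.card = n + 1)
    (hmax : IsMaximalFace K σ) (hwσ : w σ ≠ 0)
    (hL : L.faces = K.faces.erase σ)
    (hcyc : bdElem L w (n - 1) σ ∈ cycles L w (n - 1)) :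
    ((∃ r : R, r ≠ 0 ∧
        r • classOf L w (n - 1) (bdElem L w (n - 1) σ) hcyc = 0) →
      Nonempty (wHomology K w n ≃ₗ[R] (wHomology L w n × R))) ∧
    (¬ (∃ r : R, r ≠ 0 ∧
        r • classOf L w (n - 1) (bdElem L w (n - 1) σ) hcyc = 0) →
      Nonempty (wHomology K w n ≃ₗ[R] wHomology L w n)) := by
  obtain ⟨m, rfl⟩ : ∃ m, n = m + 1 := ⟨n - 1, by omega⟩
  have h : L.faces ⊆ K.faces := hL ▸ Finset.erase_subset _ _
  let s : ChainIdx K w (m + 1) := ⟨σ, hmax.1, hσcard, hwσ⟩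
  have hex := ker_coeff_eq_range_incl h w (m + 1) hL s rfl
  have hB := map_incl_bdries h w (m + 1) hL (by omega)
  have hZ := comap_incl_cycles h w m
  have hι := incl_injective h w (m + 1)
  have htors : (∃ r : R, r ≠ 0 ∧
      r • classOf L w (m + 1 - 1) (bdElem L w (m + 1 - 1) σ) hcyc = 0) ↔
      (cycles K w (m + 1)).map (Finsupp.lapply s : WChain K w (m + 1) →ₗ[R] R) ≠ ⊥ := by
    rw [map_coeff_cycles_ne_bot_iff w m hL hσcard s rfl]
    refine exists_congr fun r => and_congr_right fun _ => ?_
    rw [← Submodule.Quotient.mk_eq_zero (bdries L w m)]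
    exact Subtype.ext_iff
  rw [htors, not_not]
  exact ⟨nonempty_equiv_prod_of_map_ne_bot hι hex hB hZ,
    nonempty_equiv_of_map_eq_bot hι hex hB hZ⟩

end FinSC
end

section
/- Let (K,w) be a weighted simplicial complex over an integral domain R equipped with a discrete Morse function f, and let a < b be real numbers. Suppose that every simplex α ∈ K with f(α) ∈ (a,b] is non-critical and w-simple. Then K(b) collapses onto K(a), and this collapse preserves weighted homology: H_i(K(b), w) ≅ H_i(K(a), w) for all i ≥ 0. -/
namespace FinSC

variable {V : Type*} [LinearOrder V] {R : Type*} [CommRing R] [IsDomain R]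

set_option linter.unusedSectionVars false

/-! ### Discrete Morse combinatorics -/

/-- `(σ, τ)` is a pair of the discrete gradient field of `f`: `σ` is a codimension-one face
of `τ` with `f τ ≤ f σ`. -/
def GPair (K : FinSC V) (f : Finset V → ℝ) (σ τ : Finset V) : Prop :=
  σ ∈ K.faces ∧ τ ∈ K.faces ∧ σ ⊂ τ ∧ τ.card = σ.card + 1 ∧ f τ ≤ f σ

lemma nonempty_of_mem {K : FinSC V} {σ : Finset V} (h : σ ∈ K.faces) : σ.Nonempty := by
  rcases σ.eq_empty_or_nonempty with rfl | hne
  · exact absurd h K.not_empty_mem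
  · exact hne

/-- Between two simplices at codimension two there are two intermediate simplices. -/
lemma exists_other {x y z : Finset V} (hxy : x ⊂ y) (hyz : y ⊂ z)
    (h1 : y.card = x.card + 1) (h2 : z.card = y.card + 1) :
    ∃ y', y' ≠ y ∧ x ⊂ y' ∧ y' ⊂ z ∧ y'.card = x.card + 1 ∧ z.card = y'.card + 1 := by
  obtain ⟨p, hp, hpy⟩ := Finset.exists_of_ssubset hyz
  have hpx : p ∉ x := fun h => hpy (hxy.1 h)
  have hc : (insert p x).card = x.card + 1 := Finset.card_insert_of_notMem hpx
  have hsub : insert p x ⊆ z := Finset.insert_subset hp (hxy.1.trans hyz.1)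
  refine ⟨insert p x, ?_, Finset.ssubset_insert hpx, ?_, hc, by omega⟩
  · rintro rfl
    exact hpy (Finset.mem_insert_self _ _)
  · refine ⟨hsub, fun h => ?_⟩
    have := Finset.card_le_card h
    omega

/-- Forman's lemma: no simplex is the upper end of one gradient pair and the lower end of
another. -/
lemma GPair.not_chain {K : FinSC V} {f : Finset V → ℝ} (hf : IsDiscreteMorse K f)
    {x y z : Finset V} (h1 : GPair K f x y) (h2 : GPair K f y z) : False := by
  obtain ⟨hx, hy, hxy, hc1, hf1⟩ := h1
  obtain ⟨-, hz, hyz, hc2, hf2⟩ := h2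
  obtain ⟨y', hne, hxy', hyz', hc1', hc2'⟩ := exists_other hxy hyz hc1 hc2
  have hy' : y' ∈ K.faces := K.down_closed z hz y' hyz'.1 ((nonempty_of_mem hx).mono hxy'.1)
  have e1 : ¬ f y' ≤ f x := fun h =>
    hne ((hf x hx).1 ⟨hy', hxy', hc1', h⟩ ⟨hy, hxy, hc1, hf1⟩)
  have e2 : ¬ f z ≤ f y' := fun h =>
    hne ((hf z hz).2 ⟨hy', hyz', hc2'.symm, h⟩ ⟨hy, hyz, hc2.symm, hf2⟩)
  linarith

lemma GPair.upper_unique {K : FinSC V} {f : Finset V → ℝ} (hf : IsDiscreteMorse K f)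
    {x y z : Finset V} (h1 : GPair K f x y) (h2 : GPair K f x z) : y = z :=
  (hf x h1.1).1 ⟨h1.2.1, h1.2.2⟩ ⟨h2.2.1, h2.2.2⟩

lemma GPair.lower_unique {K : FinSC V} {f : Finset V → ℝ} (hf : IsDiscreteMorse K f)
    {x y z : Finset V} (h1 : GPair K f x z) (h2 : GPair K f y z) : x = y :=
  (hf z h1.2.1).2 ⟨h1.1, h1.2.2.1, h1.2.2.2.1.symm, h1.2.2.2.2⟩
    ⟨h2.1, h2.2.2.1, h2.2.2.2.1.symm, h2.2.2.2.2⟩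

/-- Descending inside a coface `β` of `α`, one reaches a codimension-one coface of `α` without
increasing `f`: of the two facets of `β` obtained by deleting two vertices outside `α`,
at least one has a smaller value than `β`. -/
lemma exists_facet_le {K : FinSC V} {f : Finset V → ℝ} (hf : IsDiscreteMorse K f)
    {α : Finset V} (hα : α ∈ K.faces) (m : ℕ) :
    ∀ β ∈ K.faces, α ⊂ β → β.card = α.card + 1 + m →
      ∃ β' ∈ K.faces, α ⊂ β' ∧ β'.card = α.card + 1 ∧ f β' ≤ f β := by
  induction m with
  | zero => exact fun β hβ h1 h2 => ⟨β, hβ, h1, h2, le_rfl⟩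
  | succ m ih =>
    intro β hβ h1 h2
    have hcard : 1 < (β \ α).card := by
      rw [Finset.card_sdiff_of_subset h1.1]; omega
    obtain ⟨p, hp, q, hq, hpq⟩ := Finset.one_lt_card.mp hcard
    rw [Finset.mem_sdiff] at hp hq
    have key : ∀ r, r ∈ β → r ∉ α → α ⊂ β.erase r ∧ β.erase r ∈ K.faces ∧
        (β.erase r).card = α.card + 1 + m := by
      intro r hr hrα
      have hc := Finset.card_erase_of_mem hr
      have hsub : α ⊆ β.erase r := Finset.subset_erase.mpr ⟨h1.1, hrα⟩
      refine ⟨⟨hsub, fun h => ?_⟩, K.down_closed β hβ _ (Finset.erase_subset _ _)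
        ((nonempty_of_mem hα).mono hsub), by omega⟩
      have := Finset.card_le_card h
      omega
    have hone : f (β.erase p) < f β ∨ f (β.erase q) < f β := by
      by_contra! hcon
      have e := (hf β hβ).2
        ⟨(key p hp.1 hp.2).2.1, Finset.erase_ssubset hp.1, Finset.card_erase_add_one hp.1, hcon.1⟩
        ⟨(key q hq.1 hq.2).2.1, Finset.erase_ssubset hq.1, Finset.card_erase_add_one hq.1, hcon.2⟩
      exact hpq (Finset.erase_injOn β hp.1 hq.1 e)
    rcases hone with hlt | hlt
    · obtain ⟨a, b, d⟩ := key p hp.1 hp.2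
      obtain ⟨β', e1, e2, e3, e4⟩ := ih _ b a d
      exact ⟨β', e1, e2, e3, e4.trans hlt.le⟩
    · obtain ⟨a, b, d⟩ := key q hq.1 hq.2
      obtain ⟨β', e1, e2, e3, e4⟩ := ih _ b a d
      exact ⟨β', e1, e2, e3, e4.trans hlt.le⟩

/-- A simplex of `K(c)` with value above `c` is the lower end of a gradient pair whose upper end
has value at most `c`. -/
lemma exists_pair_of_mem_levelSub {K : FinSC V} {f : Finset V → ℝ} (hf : IsDiscreteMorse K f)
    {c : ℝ} {α : Finset V} (hα : α ∈ (levelSub K f c).faces) (hc : c < f α) :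
    ∃ β, GPair K f α β ∧ f β ≤ c := by
  simp only [levelSub, Finset.mem_filter] at hα
  obtain ⟨hαK, β, hβ, hsub, hfβ⟩ := hα
  have hss : α ⊂ β := by
    refine lt_of_le_of_ne hsub ?_
    rintro rfl
    linarith
  have := Finset.card_lt_card hss
  obtain ⟨β', h1, h2, h3, h4⟩ :=
    exists_facet_le hf hαK (β.card - (α.card + 1)) β hβ hss (by omega)
  exact ⟨β', ⟨hαK, h1, h2, h3, by linarith⟩, by linarith⟩

lemma mem_levelSub_of_le {K : FinSC V} {f : Finset V → ℝ} {c : ℝ} {α β : Finset V}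
    (hα : α ∈ K.faces) (hβ : β ∈ K.faces) (h : α ⊆ β) (hc : f β ≤ c) :
    α ∈ (levelSub K f c).faces := by
  simp only [levelSub, Finset.mem_filter]
  exact ⟨hα, β, hβ, h, hc⟩

lemma mem_of_mem_levelSub {K : FinSC V} {f : Finset V → ℝ} {c : ℝ} {α : Finset V}
    (hα : α ∈ (levelSub K f c).faces) : α ∈ K.faces :=
  (Finset.mem_filter.mp hα).1

/-- `L` is obtained from the subcomplex `A` of `K` by adding whole gradient pairs, each of
constant nonzero weight. -/
def PairedOver (K : FinSC V) (w : Finset V → R) (f : Finset V → ℝ) (A L : FinSC V) : Prop :=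
  A.faces ⊆ L.faces ∧ L.faces ⊆ K.faces ∧
  ∀ ρ ∈ L.faces, ρ ∉ A.faces → ∃ σ τ, GPair K f σ τ ∧ (ρ = σ ∨ ρ = τ) ∧
    σ ∈ L.faces ∧ σ ∉ A.faces ∧ τ ∈ L.faces ∧ τ ∉ A.faces ∧ w σ = w τ ∧ w τ ≠ 0

/-- The simplices of `K(b)` outside `K(a)` are partitioned into gradient pairs, whose upper ends
have values in `(a, b]` and are therefore `w`-simple. -/
lemma pairedOver_levelSub {K : FinSC V} {w : Finset V → R} {f : Finset V → ℝ}
    (hf : IsDiscreteMorse K f) {a b : ℝ} (hab : a < b)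
    (h : ∀ α ∈ K.faces, f α ∈ Set.Ioc a b → ¬ IsCritical K f α ∧ IsWSimple K w f α) :
    PairedOver K w f (levelSub K f a) (levelSub K f b) := by
  have mk : ∀ σ τ, GPair K f σ τ → f τ ≤ b → σ ∉ (levelSub K f a).faces →
      τ ∉ (levelSub K f a).faces → σ ∈ (levelSub K f b).faces ∧ σ ∉ (levelSub K f a).faces ∧
      τ ∈ (levelSub K f b).faces ∧ τ ∉ (levelSub K f a).faces ∧ w σ = w τ ∧ w τ ≠ 0 := by
    rintro σ τ ⟨h1, h2, h3, h4, h5⟩ hb hσ hτ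
    have ha : a < f τ := by
      by_contra! hc
      exact hτ (mem_levelSub_of_le h2 h2 subset_rfl hc)
    obtain ⟨-, hw0, hws⟩ := h τ h2 ⟨ha, hb⟩
    exact ⟨mem_levelSub_of_le h1 h2 h3.1 hb, hσ, mem_levelSub_of_le h2 h2 subset_rfl hb, hτ,
      hws σ h1 h3 h4.symm h5, hw0⟩
  have up : ∀ σ τ, GPair K f σ τ → σ ∉ (levelSub K f a).faces →
      τ ∉ (levelSub K f a).faces := fun σ τ hp hσ hτ =>
    hσ ((levelSub K f a).down_closed τ hτ σ hp.2.2.1.1 (nonempty_of_mem hp.1))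
  refine ⟨fun ρ hρ => ?_, fun ρ => mem_of_mem_levelSub, fun ρ hρ hρa => ?_⟩
  · simp only [levelSub, Finset.mem_filter] at hρ ⊢
    obtain ⟨h1, β, h2, h3, h4⟩ := hρ
    exact ⟨h1, β, h2, h3, h4.trans hab.le⟩
  · have hρK := mem_of_mem_levelSub hρ
    have ha : a < f ρ := by
      by_contra! hc
      exact hρa (mem_levelSub_of_le hρK hρK subset_rfl hc)
    by_cases hb : f ρ ≤ b
    · have hnc := (h ρ hρK ⟨ha, hb⟩).1
      rw [IsCritical, not_and_or] at hnc
      push Not at hnc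
      rcases hnc with ⟨β, h1, h2, h3, h4⟩ | ⟨γ, h1, h2, h3, h4⟩
      · have hp : GPair K f ρ β := ⟨hρK, h1, h2, h3, h4⟩
        exact ⟨ρ, β, hp, Or.inl rfl, mk ρ β hp (h4.trans hb) hρa (up _ _ hp hρa)⟩
      · have hp : GPair K f γ ρ := ⟨h1, hρK, h2, h3.symm, h4⟩
        refine ⟨γ, ρ, hp, Or.inr rfl, mk γ ρ hp hb (fun hγ => ?_) hρa⟩
        -- otherwise `γ` would be paired with a simplex of value at most `a`, hence not with `ρ`
        obtain ⟨δ, hδ, hδa⟩ := exists_pair_of_mem_levelSub hf hγ (ha.trans_le h4)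
        rw [hp.upper_unique hf hδ] at ha
        linarith
    · obtain ⟨β, hp, hβ⟩ := exists_pair_of_mem_levelSub hf hρ (not_le.mp hb)
      exact ⟨ρ, β, hp, Or.inl rfl, mk ρ β hp hβ hρa (up _ _ hp hρa)⟩

/-- A pair whose upper end has the largest `f`-value among the pairs of `L` outside `A`
is a free pair. -/
lemma isFreeFace_of_max {K : FinSC V} {w : Finset V → R} {f : Finset V → ℝ}
    (hf : IsDiscreteMorse K f) {A L : FinSC V} (hL : PairedOver K w f A L)
    {σ τ : Finset V} (hp : GPair K f σ τ) (hσ : σ ∈ L.faces) (hσA : σ ∉ A.faces)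
    (hτ : τ ∈ L.faces)
    (hmax : ∀ σ' τ', GPair K f σ' τ' → τ' ∈ L.faces → τ' ∉ A.faces → f τ' ≤ f τ) :
    IsFreeFace L σ τ := by
  have notA : ∀ ρ, σ ⊆ ρ → ρ ∉ A.faces := fun ρ hs hρ =>
    hσA (A.down_closed ρ hρ σ hs (nonempty_of_mem hσ))
  have cod1 : ∀ ρ ∈ L.faces, σ ⊂ ρ → ρ.card = σ.card + 1 → ρ = τ := by
    intro ρ hρ hs hc
    by_contra hne
    have cof : ∀ ρ' ∈ K.faces, σ ⊂ ρ' → ρ'.card = σ.card + 1 → ρ' ≠ τ → f σ < f ρ' := by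
      intro ρ' h1 h2 h3 h4
      by_contra! hle
      exact h4 (GPair.upper_unique hf ⟨hp.1, h1, h2, h3, hle⟩ hp)
    have hlt := cof ρ (hL.2.1 hρ) hs hc hne
    have hle := hp.2.2.2.2
    obtain ⟨σ', τ', hp', hor, h1, h2, h3, h4, -⟩ := hL.2.2 ρ hρ (notA ρ hs.1)
    have hm := hmax σ' τ' hp' h3 h4
    rcases hor with rfl | rfl
    · obtain ⟨ρ', hne', hs1, hs2, hc1, hc2⟩ := exists_other hs hp'.2.2.1 hc hp'.2.2.2.1
      have hρ' : ρ' ∈ K.faces :=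
        K.down_closed τ' hp'.2.1 ρ' hs2.1 ((nonempty_of_mem hσ).mono hs1.1)
      have hlt' : f ρ' < f τ' := by
        by_contra! hge
        exact hne' (GPair.lower_unique hf ⟨hρ', hp'.2.1, hs2, hc2, hge⟩ hp')
      by_cases heq : ρ' = τ
      · rw [heq] at hlt'
        linarith
      · have := cof ρ' hρ' hs1 hc1 heq
        linarith
    · linarith
  refine ⟨hσ, hτ, hp.2.2.1, fun ρ hρ hs => ?_⟩
  -- every vertex of `ρ` outside `σ` gives a codimension-one coface of `σ`, necessarily `τ`
  have hins : ∀ p ∈ ρ, p ∉ σ → insert p σ = τ := fun p hpρ hpσ =>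
    cod1 _ (L.down_closed ρ hρ _ (Finset.insert_subset hpρ hs.1) (Finset.insert_nonempty _ _))
      (Finset.ssubset_insert hpσ) (Finset.card_insert_of_notMem hpσ)
  obtain ⟨p, hpρ, hpσ⟩ := Finset.exists_of_ssubset hs
  rw [← hins p hpρ hpσ]
  refine Finset.Subset.antisymm (fun q hq => ?_) (Finset.insert_subset hpρ hs.1)
  by_cases hqσ : q ∈ σ
  · exact Finset.mem_insert_of_mem hqσ
  · rw [hins p hpρ hpσ, ← hins q hq hqσ]
    exact Finset.mem_insert_self _ _

/-- The complex left after removing a free pair. -/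
def removePair (L : FinSC V) {σ τ : Finset V} (h : IsFreeFace L σ τ) : FinSC V where
  faces := L.faces \ {σ, τ}
  not_empty_mem := fun hm => L.not_empty_mem (Finset.mem_sdiff.mp hm).1
  down_closed := by
    intro ρ hρ ρ' hsub hne
    obtain ⟨-, -, hst, hfree⟩ := h
    simp only [Finset.mem_sdiff, Finset.mem_insert, Finset.mem_singleton, not_or] at hρ ⊢
    refine ⟨L.down_closed ρ hρ.1 ρ' hsub hne, ?_, ?_⟩
    · rintro rfl
      exact hρ.2.2 (hfree ρ hρ.1 (lt_of_le_of_ne hsub (Ne.symm hρ.2.1)))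
    · rintro rfl
      exact hρ.2.2 (hfree ρ hρ.1 (lt_of_lt_of_le hst hsub))

lemma pairedOver_removePair {K : FinSC V} {w : Finset V → R} {f : Finset V → ℝ}
    (hf : IsDiscreteMorse K f) {A L : FinSC V} (hL : PairedOver K w f A L)
    {σ τ : Finset V} (hp : GPair K f σ τ) (hσA : σ ∉ A.faces) (hτA : τ ∉ A.faces)
    (hfree : IsFreeFace L σ τ) : PairedOver K w f A (removePair L hfree) := by
  have mem : ∀ ρ, ρ ∈ (removePair L hfree).faces ↔ ρ ∈ L.faces ∧ ρ ≠ σ ∧ ρ ≠ τ := by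
    intro ρ
    simp [removePair]
  refine ⟨fun ρ hρ => (mem ρ).mpr ⟨hL.1 hρ, ?_, ?_⟩, fun ρ hρ => hL.2.1 ((mem ρ).mp hρ).1, ?_⟩
  · rintro rfl; exact hσA hρ
  · rintro rfl; exact hτA hρ
  · intro ρ hρ hρA
    obtain ⟨hρL, hρσ, hρτ⟩ := (mem ρ).mp hρ
    obtain ⟨σ', τ', hp', hor, h1, h2, h3, h4, h5⟩ := hL.2.2 ρ hρL hρA
    have e1 : σ' ≠ σ := by
      rintro rfl
      have := hp.upper_unique hf hp'
      subst this
      tauto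
    have e2 : τ' ≠ τ := by
      rintro rfl
      exact e1 (hp'.lower_unique hf hp)
    have e3 : σ' ≠ τ := by
      rintro rfl
      exact hp.not_chain hf hp'
    have e4 : τ' ≠ σ := by
      rintro rfl
      exact hp'.not_chain hf hp
    exact ⟨σ', τ', hp', hor, (mem _).mpr ⟨h1, e1, e3⟩, h2, (mem _).mpr ⟨h3, e4, e2⟩, h4, h5⟩

/-! ### The weighted boundary by vertex deletion -/

lemma divR_mul {a b : R} (h : b ∣ a) : b * divR a b = a := by
  rw [divR, dif_pos h]
  exact h.choose_spec.symm

lemma divR_self {a : R} (h : a ≠ 0) : divR a a = 1 :=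
  mul_left_cancel₀ h (by rw [divR_mul dvd_rfl, mul_one])

lemma divR_trans {a b c : R} (hc : c ≠ 0) (hcb : c ∣ b) (hba : b ∣ a) :
    divR a b * divR b c = divR a c := by
  apply mul_left_cancel₀ hc
  rw [divR_mul (hcb.trans hba), mul_left_comm, divR_mul hcb, mul_comm, divR_mul hba]

/-- The sign with which the facet `σ \ {v}` enters the boundary of `σ`. -/
def vSign (R : Type*) [CommRing R] (σ : Finset V) (v : V) : R :=
  (-1) ^ (σ.filter (· < v)).card

/-- The basis chain of `γ`, or `0` if `γ` does not index a basis element of `C_n(K, w)`. -/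
noncomputable def basisChain (K : FinSC V) (w : Finset V → R) (n : ℕ) (γ : Finset V) :
    WChain K w n :=
  open scoped Classical in
  if h : γ ∈ K.faces ∧ γ.card = n + 1 ∧ w γ ≠ 0 then Finsupp.single ⟨γ, h⟩ 1 else 0

lemma basisChain_val (K : FinSC V) (w : Finset V → R) {n : ℕ} (s : ChainIdx K w n) :
    basisChain K w n s.1 = Finsupp.single s 1 := by
  rw [basisChain, dif_pos s.2]

lemma basisChain_apply_ne {K : FinSC V} {w : Finset V → R} {n : ℕ} {γ : Finset V}
    {s : ChainIdx K w n} (h : γ ≠ s.1) : basisChain K w n γ s = 0 := by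
  rw [basisChain]
  split_ifs with h'
  · rw [Finsupp.single_apply, if_neg]
    rintro rfl
    exact h rfl
  · rfl

lemma dFace_eq {σ : Finset V} {m : ℕ} (h : σ.card = m) (i : Fin m) :
    dFace σ i = σ.erase (σ.orderEmbOfFin h i) := by
  have hi : (i : ℕ) < (σ.sort (· ≤ ·)).length := by
    rw [Finset.length_sort, h]; exact i.2
  rw [dFace, List.getElem?_eq_getElem hi]
  rfl

lemma card_filter_lt_orderEmbOfFin {σ : Finset V} {m : ℕ} (h : σ.card = m) (i : Fin m) :
    (σ.filter (· < σ.orderEmbOfFin h i)).card = i := by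
  have : σ.filter (· < σ.orderEmbOfFin h i) =
      (Finset.Iio i).map (σ.orderEmbOfFin h).toEmbedding := by
    ext v
    simp only [Finset.mem_filter, Finset.mem_map, Finset.mem_Iio]
    constructor
    · rintro ⟨hv, hlt⟩
      rw [← Finset.mem_coe, ← Finset.range_orderEmbOfFin σ h] at hv
      obtain ⟨j, rfl⟩ := hv
      exact ⟨j, by simpa using hlt, rfl⟩
    · rintro ⟨j, hj, rfl⟩
      exact ⟨Finset.orderEmbOfFin_mem σ h j, by simpa using hj⟩
  rw [this, Finset.card_map, Fin.card_Iio]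

lemma bdElem_eq (K : FinSC V) (w : Finset V → R) (n : ℕ) {σ : Finset V} (h : σ.card = n + 2) :
    bdElem K w n σ = ∑ v ∈ σ, (vSign R σ v * divR (w σ) (w (σ.erase v))) •
      basisChain K w n (σ.erase v) := by
  rw [bdElem, Finset.sum_range]
  conv_rhs => rw [← Finset.image_orderEmbOfFin_univ σ h]
  rw [Finset.sum_image (fun _ _ _ _ e => (σ.orderEmbOfFin h).injective e)]
  refine Finset.sum_congr rfl fun i _ => ?_
  rw [Finset.image_orderEmbOfFin_univ, vSign, card_filter_lt_orderEmbOfFin, ← dFace_eq h i,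
    basisChain]
  split_ifs with h'
  · rw [Finsupp.smul_single, smul_eq_mul, mul_one]
  · rw [smul_zero]

lemma wBoundary_single_s11 (K : FinSC V) (w : Finset V → R) (n : ℕ) (s : ChainIdx K w (n + 1))
    (r : R) : wBoundary K w n (Finsupp.single s r) = r • bdElem K w n s.1 := by
  rw [wBoundary, Finsupp.linearCombination_single]

/-- Deleting `v` and then `u` carries the opposite sign of deleting `u` and then `v`. -/
lemma vSign_swap {σ : Finset V} {u v : V} (hu : u ∈ σ) (hv : v ∈ σ) (h : u ≠ v) :
    vSign R σ v * vSign R (σ.erase v) u = -(vSign R σ u * vSign R (σ.erase u) v) := by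
  wlog hlt : u < v generalizing u v
  · have := this hv hu h.symm (lt_of_le_of_ne (not_lt.mp hlt) h.symm)
    rw [this, neg_neg]
  have e1 : (σ.erase v).filter (· < u) = σ.filter (· < u) := by
    ext x
    simp only [Finset.mem_filter, Finset.mem_erase]
    constructor
    · tauto
    · rintro ⟨h1, h2⟩
      exact ⟨⟨(h2.trans hlt).ne, h1⟩, h2⟩
  have e2 : (σ.filter (· < v)).card = ((σ.erase u).filter (· < v)).card + 1 := by
    rw [Finset.filter_erase, Finset.card_erase_add_one]
    simp [hu, hlt]
  rw [vSign, vSign, vSign, vSign, e1, e2]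
  ring

lemma wBoundary_comp (K : FinSC V) (w : Finset V → R) (hw : IsWeight K w) (n : ℕ)
    (x : WChain K w (n + 2)) : wBoundary K w n (wBoundary K w (n + 1) x) = 0 := by
  induction x using Finsupp.induction_linear with
  | zero => simp
  | add x y hx hy => simp [hx, hy]
  | single s r =>
    obtain ⟨σ, hσ, hc, hw0⟩ := s
    rw [wBoundary_single_s11, map_smul]
    convert smul_zero r
    dsimp only
    rw [bdElem_eq K w (n + 1) hc, map_sum]
    have face : ∀ v ∈ σ, σ.erase v ∈ K.faces ∧ (σ.erase v).card = n + 1 + 1 ∧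
        w (σ.erase v) ≠ 0 := by
      intro v hv
      have hcv : (σ.erase v).card = n + 1 + 1 := by rw [Finset.card_erase_of_mem hv]; omega
      have hm : σ.erase v ∈ K.faces := K.down_closed σ hσ _ (Finset.erase_subset _ _)
        (Finset.card_pos.mp (by omega))
      refine ⟨hm, hcv, fun h0 => hw0 ?_⟩
      have := hw _ hm _ hσ (Finset.erase_subset _ _)
      rwa [h0, zero_dvd_iff] at this
    have expand : ∀ v ∈ σ, wBoundary K w n ((vSign R σ v * divR (w σ) (w (σ.erase v))) •
        basisChain K w (n + 1) (σ.erase v)) = ∑ u ∈ σ.erase v,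
          (vSign R σ v * vSign R (σ.erase v) u * divR (w σ) (w ((σ.erase v).erase u))) •
            basisChain K w n ((σ.erase v).erase u) := by
      intro v hv
      obtain ⟨h1, h2, h3⟩ := face v hv
      rw [map_smul, basisChain_val K w ⟨_, face v hv⟩, wBoundary_single_s11, one_smul,
        bdElem_eq K w n h2, Finset.smul_sum]
      refine Finset.sum_congr rfl fun u hu => ?_
      rw [smul_smul]
      congr 1
      have hcu : ((σ.erase v).erase u).card = n + 1 := by
        rw [Finset.card_erase_of_mem hu]; omega
      have hm : (σ.erase v).erase u ∈ K.faces := K.down_closed _ h1 _ (Finset.erase_subset _ _)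
        (Finset.card_pos.mp (by omega))
      have d1 := hw _ hm _ h1 (Finset.erase_subset _ _)
      have d2 := hw _ h1 _ hσ (Finset.erase_subset _ _)
      rw [← divR_trans (ne_zero_of_dvd_ne_zero h3 d1) d1 d2]
      ring
    rw [Finset.sum_congr rfl expand, Finset.sum_sigma']
    refine Finset.sum_involution (fun p _ => ⟨p.2, p.1⟩) ?_ ?_ ?_ ?_
    · rintro ⟨v, u⟩ hp
      simp only [Finset.mem_sigma, Finset.mem_erase] at hp
      obtain ⟨hv, huv, hu⟩ := hp
      dsimp only
      rw [vSign_swap hu hv huv, Finset.erase_right_comm, ← add_smul]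
      convert zero_smul R _
      ring
    · rintro ⟨v, u⟩ hp - heq
      simp only [Finset.mem_sigma, Finset.mem_erase] at hp
      simp only [Sigma.mk.injEq] at heq
      exact hp.2.1 heq.1
    · rintro ⟨v, u⟩ hp
      simp only [Finset.mem_sigma, Finset.mem_erase] at hp ⊢
      exact ⟨hp.2.2, hp.2.1.symm, hp.1⟩
    · intro p hp
      rfl

/-! ### Inclusions of subcomplexes -/

/-- The inclusion `C_n(L, w) → C_n(K, w)` for a subcomplex `L` of `K`. -/
noncomputable def inclChain {L K : FinSC V} (hLK : L.faces ⊆ K.faces) (w : Finset V → R) (n : ℕ) :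
    WChain L w n →ₗ[R] WChain K w n :=
  Finsupp.lmapDomain R R fun s => ⟨s.1, hLK s.2.1, s.2.2⟩

lemma inclChain_injective {L K : FinSC V} (hLK : L.faces ⊆ K.faces) (w : Finset V → R) (n : ℕ) :
    Function.Injective (inclChain hLK w n) :=
  Finsupp.mapDomain_injective fun s t h => by
    simp only [Subtype.mk.injEq] at h
    exact Subtype.ext h

lemma inclChain_basisChain {L K : FinSC V} (hLK : L.faces ⊆ K.faces) (w : Finset V → R) (n : ℕ)
    {γ : Finset V} (hγ : γ ∈ L.faces) :
    inclChain hLK w n (basisChain L w n γ) = basisChain K w n γ := by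
  by_cases h : γ.card = n + 1 ∧ w γ ≠ 0
  · rw [basisChain, basisChain, dif_pos ⟨hγ, h⟩, dif_pos ⟨hLK hγ, h⟩]
    simp [inclChain]
  · rw [basisChain, basisChain, dif_neg fun h' => h h'.2, dif_neg fun h' => h h'.2, map_zero]

lemma inclChain_wBoundary {L K : FinSC V} (hLK : L.faces ⊆ K.faces) (w : Finset V → R) (n : ℕ)
    (x : WChain L w (n + 1)) :
    inclChain hLK w n (wBoundary L w n x) = wBoundary K w n (inclChain hLK w (n + 1) x) := by
  induction x using Finsupp.induction_linear with
  | zero => simp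
  | add x y hx hy => simp [hx, hy]
  | single s r =>
    have : inclChain hLK w (n + 1) (Finsupp.single s r) =
        Finsupp.single ⟨s.1, hLK s.2.1, s.2.2⟩ r := by
      simp [inclChain]
    rw [this, wBoundary_single_s11, wBoundary_single_s11, map_smul, bdElem_eq L w n s.2.2.1,
      bdElem_eq K w n s.2.2.1, map_sum]
    congr 1
    refine Finset.sum_congr rfl fun v hv => ?_
    rw [map_smul, inclChain_basisChain]
    have := Finset.card_erase_add_one hv
    have hc := s.2.2.1
    exact L.down_closed _ s.2.1 _ (Finset.erase_subset _ _) (Finset.card_pos.mp (by omega))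

lemma mem_range_inclChain {L K : FinSC V} (hLK : L.faces ⊆ K.faces) (w : Finset V → R) (n : ℕ)
    (x : WChain K w n) (hx : ∀ s : ChainIdx K w n, s.1 ∉ L.faces → x s = 0) :
    ∃ y, inclChain hLK w n y = x := by
  rw [← x.sum_single]
  change x.sum Finsupp.single ∈ LinearMap.range (inclChain hLK w n)
  refine Submodule.sum_mem _ fun s hs => ?_
  by_cases h : s.1 ∈ L.faces
  · exact ⟨Finsupp.single ⟨s.1, h, s.2.2⟩ (x s), by simp [inclChain]⟩
  · rw [hx s h, Finsupp.single_zero]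
    exact Submodule.zero_mem _

lemma mem_cycles_inclChain {L K : FinSC V} (hLK : L.faces ⊆ K.faces) (w : Finset V → R) :
    ∀ (n : ℕ) (x : WChain L w n), inclChain hLK w n x ∈ cycles K w n ↔ x ∈ cycles L w n
  | 0, x => by simp [cycles]
  | n + 1, x => by
    simp only [cycles, LinearMap.mem_ker]
    rw [← inclChain_wBoundary, map_eq_zero_iff _ (inclChain_injective hLK w n)]

/-- A criterion for the inclusion of a subcomplex to induce isomorphisms on homology. -/
lemma wHomology_equiv_of_incl {L K : FinSC V} (hLK : L.faces ⊆ K.faces) (w : Finset V → R)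
    (n : ℕ)
    (hinj : ∀ z, inclChain hLK w n z ∈ bdries K w n → z ∈ bdries L w n)
    (hsurj : ∀ z ∈ cycles K w n, ∃ z', z - inclChain hLK w n z' ∈ bdries K w n)
    (hbc : bdries K w n ≤ cycles K w n) :
    Nonempty (wHomology K w n ≃ₗ[R] wHomology L w n) := by
  have hle : bdries L w n ≤ (bdries K w n).comap (inclChain hLK w n) := by
    rintro _ ⟨y, rfl⟩
    exact ⟨inclChain hLK w (n + 1) y, (inclChain_wBoundary hLK w n y).symm⟩
  let φ := (bdries L w n).mapQ (bdries K w n) (inclChain hLK w n) hle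
  have hφinj : Function.Injective φ := by
    rw [← LinearMap.ker_eq_bot, LinearMap.ker_eq_bot']
    intro q hq
    obtain ⟨z, rfl⟩ := Submodule.mkQ_surjective _ q
    simp only [φ, Submodule.mkQ_apply, Submodule.mapQ_apply, Submodule.Quotient.mk_eq_zero] at hq ⊢
    exact hinj z hq
  have himg : (wHomologyS L w n).map φ = wHomologyS K w n := by
    apply le_antisymm
    · rintro _ ⟨_, ⟨z, hz, rfl⟩, rfl⟩
      exact ⟨inclChain hLK w n z, (mem_cycles_inclChain hLK w n z).mpr hz, rfl⟩
    · rintro _ ⟨z, hz, rfl⟩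
      obtain ⟨z', hz'⟩ := hsurj z hz
      refine ⟨_, ⟨z', (mem_cycles_inclChain hLK w n z').mp ?_, rfl⟩, ?_⟩
      · have := Submodule.sub_mem _ hz (hbc hz')
        rwa [sub_sub_cancel] at this
      · exact ((Submodule.Quotient.eq _).mpr hz').symm
  exact ⟨((Submodule.equivMapOfInjective φ hφinj _).trans (LinearEquiv.ofEq _ _ himg)).symm⟩

/-! ### Elementary collapses of constant weight -/

lemma bdries_le_cycles (K : FinSC V) (w : Finset V → R) (hw : IsWeight K w) :
    ∀ n, bdries K w n ≤ cycles K w n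
  | 0 => le_top
  | n + 1 => by
    rintro _ ⟨y, rfl⟩
    exact wBoundary_comp K w hw n y

/-- In the boundary of `τ` a facet of the same weight has an invertible coefficient. -/
lemma isUnit_bdElem {K : FinSC V} {w : Finset V → R} {n : ℕ} {τ : Finset V}
    (s : ChainIdx K w n) (hτ : τ.card = n + 2) (hs : s.1 ⊂ τ) (hww : w s.1 = w τ) :
    IsUnit (bdElem K w n τ s) := by
  obtain ⟨v, hv, hvs⟩ := Finset.exists_of_ssubset hs
  have he : τ.erase v = s.1 := by
    refine (Finset.eq_of_subset_of_card_le (Finset.subset_erase.mpr ⟨hs.1, hvs⟩) ?_).symm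
    rw [Finset.card_erase_of_mem hv, s.2.2.1]
    omega
  rw [bdElem_eq K w n hτ, Finsupp.finsetSum_apply, Finset.sum_eq_single v]
  · rw [he, hww, divR_self (hww ▸ s.2.2.2), basisChain_val]
    simpa [vSign] using (isUnit_one (M := R)).neg.pow _
  · intro u hu huv
    rw [Finsupp.smul_apply, basisChain_apply_ne, smul_zero]
    intro h
    exact huv (Finset.erase_injOn τ hu hv (h.trans he.symm))
  · exact fun h => absurd hv h

lemma bdElem_apply_eq_zero {K : FinSC V} {w : Finset V → R} {n : ℕ} {τ : Finset V}
    (s : ChainIdx K w n) (hτ : τ.card = n + 2) (hs : ¬ s.1 ⊂ τ) : bdElem K w n τ s = 0 := by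
  rw [bdElem_eq K w n hτ, Finsupp.finsetSum_apply]
  refine Finset.sum_eq_zero fun v hv => ?_
  rw [Finsupp.smul_apply, basisChain_apply_ne, smul_zero]
  rintro h
  exact hs (h ▸ Finset.erase_ssubset hv)

/-- Removing a free pair of equal nonzero weights preserves weighted homology: the boundary of
`τ` expresses `σ` through the other simplices, and `τ` is the only simplex whose boundary
involves `σ`. -/
lemma wHomology_removePair {K : FinSC V} {w : Finset V → R} (hw : IsWeight K w)
    {σ τ : Finset V} (hfree : IsFreeFace K σ τ) (hcard : τ.card = σ.card + 1)
    (hww : w σ = w τ) (hw0 : w τ ≠ 0) (k : ℕ) :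
    Nonempty (wHomology K w k ≃ₗ[R] wHomology (removePair K hfree) w k) := by
  have hLK : (removePair K hfree).faces ⊆ K.faces := Finset.sdiff_subset
  obtain ⟨hσ, hτ, hst, huniq⟩ := id hfree
  have hσpos := Finset.card_pos.mpr (nonempty_of_mem hσ)
  have range_of : ∀ n (x : WChain K w n), (∀ s, s.1 = σ → x s = 0) → (∀ s, s.1 = τ → x s = 0) →
      ∃ y, inclChain hLK w n y = x := by
    intro n x h1 h2
    refine mem_range_inclChain hLK w n x fun s hs => ?_
    by_cases e1 : s.1 = σ
    · exact h1 s e1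
    by_cases e2 : s.1 = τ
    · exact h2 s e2
    · exact absurd (by simp [removePair, s.2.1, e1, e2]) hs
  -- the part of a chain along `σ` can be removed by subtracting a multiple of `∂ τ`
  have kill : ∀ n (x : WChain K w n), ∃ y, ∀ s, s.1 = σ → (x - wBoundary K w n y) s = 0 := by
    intro n x
    by_cases hn : σ.card = n + 1
    · let s : ChainIdx K w n := ⟨σ, hσ, hn, hww ▸ hw0⟩
      let t : ChainIdx K w (n + 1) := ⟨τ, hτ, by omega, hw0⟩
      obtain ⟨u, hu⟩ := isUnit_bdElem s (by omega : τ.card = n + 2) hst hww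
      refine ⟨Finsupp.single t (x s * ↑u⁻¹), fun s' hs' => ?_⟩
      obtain rfl : s' = s := Subtype.ext hs'
      rw [wBoundary_single_s11, Finsupp.sub_apply, Finsupp.smul_apply, smul_eq_mul, ← hu]
      simp
    · exact ⟨0, fun s hs => absurd (hs ▸ s.2.2.1) hn⟩
  -- the coefficient of `∂ x` at `σ` is a unit times the coefficient of `x` at `τ`
  have van : ∀ n (x : WChain K w (n + 1)), (∀ s, s.1 = σ → wBoundary K w n x s = 0) →
      ∀ t, t.1 = τ → x t = 0 := by
    intro n x hx t ht
    have hτc : τ.card = n + 2 := ht ▸ t.2.2.1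
    let s : ChainIdx K w n := ⟨σ, hσ, by omega, hww ▸ hw0⟩
    have h0 := hx s rfl
    have hu := isUnit_bdElem s hτc hst hww
    rw [wBoundary, Finsupp.linearCombination_apply, Finsupp.sum, Finsupp.finsetSum_apply,
      Finset.sum_eq_single t] at h0
    · rw [Finsupp.smul_apply, smul_eq_mul, ht] at h0
      exact (hu.mul_left_eq_zero).mp h0
    · intro t' _ hne
      rw [Finsupp.smul_apply, bdElem_apply_eq_zero s t'.2.2.1, smul_zero]
      exact fun hs => hne (Subtype.ext ((huniq t'.1 t'.2.1 hs).trans ht.symm))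
    · intro hns
      rw [Finsupp.notMem_support_iff.mp hns, zero_smul, Finsupp.zero_apply]
  refine wHomology_equiv_of_incl hLK w k ?_ ?_ (bdries_le_cycles K w hw k)
  · rintro z ⟨c, hc⟩
    obtain ⟨y, hy⟩ := kill (k + 1) c
    have hc' : wBoundary K w k (c - wBoundary K w (k + 1) y) = inclChain hLK w k z := by
      rw [map_sub, wBoundary_comp K w hw, sub_zero, hc]
    obtain ⟨c'', hc''⟩ := range_of _ _ hy (van k _ (fun s hs => by
      rw [hc']
      refine Finsupp.mapDomain_of_notMem_range _ _ ?_
      rintro ⟨s', rfl⟩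
      have := s'.2.1
      simp [removePair, show s'.1 = σ from hs] at this))
    refine ⟨c'', inclChain_injective hLK w k ?_⟩
    rw [inclChain_wBoundary, hc'', hc']
  · intro z hz
    obtain ⟨y, hy⟩ := kill k z
    have hτv : ∀ t, t.1 = τ → (z - wBoundary K w k y) t = 0 := by
      cases k with
      | zero =>
        intro t ht
        have := t.2.2.1
        rw [ht] at this
        omega
      | succ m =>
        refine van m _ fun s _ => ?_
        rw [map_sub, wBoundary_comp K w hw, LinearMap.mem_ker.mp hz, sub_zero,
          Finsupp.zero_apply]
    obtain ⟨z', hz'⟩ := range_of _ _ hy hτv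
    exact ⟨z', y, by rw [hz', sub_sub_cancel]⟩

/-! ### Collapsing onto the lower level -/

/-- A complex made of `A` and gradient pairs collapses onto `A`, one pair at a time, the pair
with the largest upper value first. -/
lemma collapse_of_pairedOver {K : FinSC V} {w : Finset V → R} (hw : IsWeight K w)
    {f : Finset V → ℝ} (hf : IsDiscreteMorse K f) {A : FinSC V} (N : ℕ) :
    ∀ L : FinSC V, L.faces.card = N → PairedOver K w f A L →
      Collapses L A ∧ ∀ i, Nonempty (wHomology L w i ≃ₗ[R] wHomology A w i) := by
  induction N using Nat.strong_induction_on with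
  | _ N ih =>
  intro L hN hL
  by_cases hLA : L.faces ⊆ A.faces
  · obtain rfl : L = A := by
      have := hLA.antisymm hL.1
      cases L
      cases A
      simpa using this
    exact ⟨Relation.ReflTransGen.refl, fun i => ⟨LinearEquiv.refl R _⟩⟩
  classical
  -- the upper ends of the gradient pairs of `L` outside `A`
  let T : Finset (Finset V) :=
    L.faces.filter fun τ => ∃ σ, GPair K f σ τ ∧
      σ ∈ L.faces ∧ σ ∉ A.faces ∧ τ ∉ A.faces ∧ w σ = w τ ∧ w τ ≠ 0
  have hT : T.Nonempty := by
    obtain ⟨ρ, hρ, hρA⟩ := Finset.not_subset.mp hLA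
    obtain ⟨σ, τ, hp, -, h1, h2, h3, h4, h5⟩ := hL.2.2 ρ hρ hρA
    exact ⟨τ, Finset.mem_filter.mpr ⟨h3, σ, hp, h1, h2, h4, h5⟩⟩
  obtain ⟨τ, hτT, hmax⟩ := T.exists_max_image f hT
  obtain ⟨hτ, σ, hp, hσ, hσA, hτA, hww, hw0⟩ := Finset.mem_filter.mp hτT
  have hfree : IsFreeFace L σ τ := by
    refine isFreeFace_of_max hf hL hp hσ hσA hτ fun σ' τ' hp' h1 h2 => ?_
    obtain ⟨σ'', τ'', hp'', hor, g1, g2, g3, g4, g5⟩ := hL.2.2 τ' h1 h2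
    rcases hor with rfl | rfl
    · exact (hp'.not_chain hf hp'').elim
    · exact hmax _ (Finset.mem_filter.mpr ⟨g3, σ'', hp'', g1, g2, g4, g5⟩)
  have hlt : (removePair L hfree).faces.card < N := by
    rw [← hN]
    refine Finset.card_lt_card ⟨Finset.sdiff_subset, fun h => ?_⟩
    have := h hσ
    simp [removePair] at this
  obtain ⟨hcol, hhom⟩ := ih _ hlt _ rfl (pairedOver_removePair hf hL hp hσA hτA hfree)
  have hwL : IsWeight L w := fun s hs t ht => hw s (hL.2.1 hs) t (hL.2.1 ht)
  refine ⟨Relation.ReflTransGen.head ⟨σ, τ, hfree, ?_⟩ hcol, fun i => ?_⟩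
  · rfl
  · obtain ⟨e1⟩ := wHomology_removePair hwL hfree hp.2.2.2.1 hww hw0 i
    obtain ⟨e2⟩ := hhom i
    exact ⟨e1.trans e2⟩

/-- Theorem `thm:maincollapse`.  Let `(K,w)` be a weighted simplicial
complex over an integral domain `R` with a discrete Morse function `f`, and let
`a < b`.  Suppose every simplex `α ∈ K` with `f α ∈ (a,b]` is non-critical and
`w`-simple.  Then `K(b) ↘ K(a)` is a collapse that preserves weighted homology. -/
theorem levelSub_collapse_preserves_wHomology
    (K : FinSC V) (w : Finset V → R) (hw : IsWeight K w)
    (f : Finset V → ℝ) (hf : IsDiscreteMorse K f)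
    (a b : ℝ) (hab : a < b)
    (h : ∀ α ∈ K.faces, f α ∈ Set.Ioc a b →
      ¬ IsCritical K f α ∧ IsWSimple K w f α) :
    Collapses (levelSub K f b) (levelSub K f a) ∧
    ∀ i : ℕ, Nonempty
      (wHomology (levelSub K f b) w i ≃ₗ[R] wHomology (levelSub K f a) w i) := by
  exact collapse_of_pairedOver hw hf _ _ rfl (pairedOver_levelSub hf hab h)

end FinSC
end
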